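/- Let N be a nonempty finite type and let A : ℝ → Matrix N N ℂ be a function such that A(t) is positive definite (in particular Hermitian) for all t in a neighborhood of t₀, and A has derivative A' at t₀. Then the matrix logarithm t ↦ log(A t), defined via the continuous functional calculus applied to the real logarithm on the self-adjoint matrix A t, has derivative at t₀ equal to ∫₀¹ [s·A(t₀) + (1−s)·1]⁻¹ * A' * [s·A(t₀) + (1−s)·1]⁻¹ ds, where 1 denotes the identity matrix and the integral is the Bochner integral of the matrix-valued integrand over s ∈ [0,1]. -/

import Mathlib

/-!
Write `M_X(s) = s X + (1 - s)` and `R_X(s) = M_X(s)⁻¹` for `s ∈ [0, 1]` and `X` positive definite.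
Differentiating `s ↦ log (1 + s (x - 1))` through the functional calculus gives
`log X = ∫₀¹ (X - 1) R_X(s) ds` (`posDef_log_eq_integral`). The resolvent-type identity
`(X - 1) R_X - (Y - 1) R_Y = R_Y (X - Y) R_X` turns this into the exact difference formula
`log X - log Y = ∫₀¹ R_Y(s) (X - Y) R_X(s) ds` (`posDef_log_sub_log`). Hence the difference quotient
of `log (A t)` at `t₀` is `∫₀¹ R_{A t₀}(s) D_t R_{A t}(s) ds`, where `D_t` is the difference
quotient of `A`. The integrand depends jointly continuously on `(A t, D_t, s)` at
`(A t₀, A', s)`, so by compactness of `[0, 1]` it converges uniformly in `s`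
(`tendsto_integral_of_continuousAt`) and the limit passes under the integral.
-/

open scoped ComplexOrder

attribute [local instance] Matrix.normedAddCommGroup Matrix.normedSpace

open Filter Topology Set

/-- The integral over `[0, 1]` is continuous in a parameter at `p₀` once the integrand is jointly
continuous at all points `(p₀, s)`. Integrability away from `p₀` is only needed along the
filter, which matters because `s X + (1 - s)` need not be invertible for `X` close to a positive
definite matrix but not itself positive definite. -/
lemma tendsto_integral_of_continuousAt {ι P E : Type*} [TopologicalSpace P]
    [NormedAddCommGroup E] [NormedSpace ℝ E] {l : Filter ι} {F : P → ℝ → E} {p : ι → P} {p₀ : P}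
    (hp : Tendsto p l (𝓝 p₀))
    (hc : ∀ s ∈ Icc (0 : ℝ) 1, ContinuousAt (fun z : P × ℝ => F z.1 z.2) (p₀, s))
    (hi : ∀ᶠ i in l, ContinuousOn (F (p i)) (Icc 0 1)) :
    Tendsto (fun i => ∫ s in (0 : ℝ)..1, F (p i) s) l (𝓝 (∫ s in (0 : ℝ)..1, F p₀ s)) := by
  have hc' : ∀ s ∈ Icc (0 : ℝ) 1, ContinuousAt (F p₀) s := fun s hs =>
    (hc s hs).comp (f := fun s : ℝ => (p₀, s)) (by fun_prop)
  have h₀ : ContinuousOn (F p₀) (Icc 0 1) := fun s hs => (hc' s hs).continuousWithinAt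
  rw [Metric.tendsto_nhds]
  intro ε hε
  have key : ∀ᶠ q in 𝓝 p₀, ∀ s ∈ Icc (0 : ℝ) 1, dist (F q s) (F p₀ s) < ε / 2 := by
    refine isCompact_Icc.eventually_forall_of_forall_eventually fun s hs => ?_
    have h1 : ContinuousAt (fun z : P × ℝ => F p₀ z.2) (p₀, s) :=
      (hc' s hs).comp (f := fun z : P × ℝ => z.2) (x := (p₀, s)) continuousAt_snd
    have h2 : Tendsto (fun z : P × ℝ => dist (F z.1 z.2) (F p₀ z.2)) (𝓝 (p₀, s))
        (𝓝 (dist (F p₀ s) (F p₀ s))) := (hc s hs).dist h1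
    rw [dist_self] at h2
    exact h2.eventually_lt_const (half_pos hε)
  filter_upwards [hp.eventually key, hi] with i hk hci
  rw [dist_eq_norm, ← intervalIntegral.integral_sub
    (hci.intervalIntegrable_of_Icc zero_le_one) (h₀.intervalIntegrable_of_Icc zero_le_one)]
  have := intervalIntegral.norm_integral_le_of_norm_le_const (a := (0 : ℝ)) (b := 1)
    (C := ε / 2) (f := fun s => F (p i) s - F p₀ s) (fun s hs => by
      rw [uIoc_of_le zero_le_one] at hs
      rw [← dist_eq_norm]
      exact (hk s ⟨hs.1.le, hs.2⟩).le)
  norm_num at this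
  linarith

lemma one_add_mul_sub_one_pos {x s : ℝ} (hx : 0 < x) (hs : s ∈ Icc (0 : ℝ) 1) :
    0 < 1 + s * (x - 1) := by
  rcases hs.1.eq_or_lt with rfl | h
  · simp
  · nlinarith [mul_pos h hx, hs.2]

lemma posDef_segment {N : Type*} [DecidableEq N] {X : Matrix N N ℂ} (hX : X.PosDef) {s : ℝ} (hs : s ∈ Icc (0 : ℝ) 1) :
    (s • X + (1 - s) • (1 : Matrix N N ℂ)).PosDef := by
  rcases hs.1.eq_or_lt with rfl | h
  · simpa using Matrix.PosDef.one
  · exact (hX.smul h).add_posSemidef (Matrix.PosSemidef.one.smul (sub_nonneg.2 hs.2))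

section
variable {N : Type*} [Fintype N] [DecidableEq N]

lemma continuousAt_matrix_inv_of_isUnit {X : Matrix N N ℂ} (hX : IsUnit X) :
    ContinuousAt Inv.inv X := by
  refine continuousAt_matrix_inv X ?_
  rw [Ring.inverse_eq_inv']
  exact continuousAt_inv₀ ((Matrix.isUnit_iff_isUnit_det X).1 hX).ne_zero

lemma continuousAt_segment_inv {X : Matrix N N ℂ} (hX : X.PosDef) {s : ℝ}
    (hs : s ∈ Icc (0 : ℝ) 1) :
    ContinuousAt (fun z : Matrix N N ℂ × ℝ =>
      (z.2 • z.1 + (1 - z.2) • (1 : Matrix N N ℂ))⁻¹) (X, s) :=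
  ContinuousAt.comp
    (f := fun z : Matrix N N ℂ × ℝ => z.2 • z.1 + (1 - z.2) • (1 : Matrix N N ℂ))
    (g := Inv.inv) (x := (X, s))
    (continuousAt_matrix_inv_of_isUnit (posDef_segment hX hs).isUnit) (by fun_prop)

lemma continuousOn_segment_inv {X : Matrix N N ℂ} (hX : X.PosDef) :
    ContinuousOn (fun s : ℝ => (s • X + (1 - s) • (1 : Matrix N N ℂ))⁻¹) (Icc 0 1) :=
  fun s hs => ((continuousAt_segment_inv hX hs).comp
    (f := fun s : ℝ => (X, s)) (by fun_prop)).continuousWithinAt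

/-- The functional calculus of a fixed Hermitian matrix differentiates in a parameter,
eigenvalue by eigenvalue. -/
lemma hasDerivAt_cfc_param {X : Matrix N N ℂ} (hX : X.IsHermitian) {f : ℝ → ℝ → ℝ} {f' : ℝ → ℝ}
    {s : ℝ} (h : ∀ i, HasDerivAt (fun s => f s (hX.eigenvalues i)) (f' (hX.eigenvalues i)) s) :
    HasDerivAt (fun s => cfc (f s) X) (cfc f' X) s := by
  let L : (N → ℂ) →ₗ[ℝ] Matrix N N ℂ :=
    { toFun := fun d => Unitary.conjStarAlgAut ℂ _ hX.eigenvectorUnitary (Matrix.diagonal d)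
      map_add' := fun a b => by rw [← map_add, Matrix.diagonal_add]; rfl
      map_smul' := fun r a => by
        have : Matrix.diagonal (r • a) = (r : ℂ) • Matrix.diagonal a := by
          rw [← Matrix.diagonal_smul]; congr 1
        rw [this, map_smul]
        ext i j
        simp }
  have hd : HasDerivAt (fun s => fun i => ((f s (hX.eigenvalues i) : ℝ) : ℂ))
      (fun i => ((f' (hX.eigenvalues i) : ℝ) : ℂ)) s :=
    hasDerivAt_pi.2 fun i => (h i).ofReal_comp
  have := (LinearMap.toContinuousLinearMap L).hasFDerivAt.comp_hasDerivAt s hd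
  simp only [hX.cfc_eq]
  exact this

lemma posDef_cfc_segment {X : Matrix N N ℂ} (hX : X.PosDef) {s : ℝ} (hs : s ∈ Icc (0 : ℝ) 1) :
    cfc (fun x : ℝ => (x - 1) / (1 + s * (x - 1))) X =
      (X - 1) * (s • X + (1 - s) • (1 : Matrix N N ℂ))⁻¹ := by
  have hsa : IsSelfAdjoint X := hX.isHermitian
  have hfin : (spectrum ℝ X).Finite := by
    rw [hX.isHermitian.spectrum_real_eq_range_eigenvalues]
    exact Set.finite_range _
  have hM : cfc (fun x : ℝ => s * x + (1 - s)) X = s • X + (1 - s) • (1 : Matrix N N ℂ) := by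
    rw [cfc_add_const (1 - s) (fun x => s * x) X, cfc_const_mul_id s X,
      Algebra.algebraMap_eq_smul_one]
  have hX1 : cfc (fun x : ℝ => x - 1) X = X - 1 := by
    rw [cfc_sub (fun x : ℝ => x) (fun _ => 1) X, cfc_id' ℝ X, cfc_const_one ℝ X]
  have hu := (posDef_segment hX hs).isUnit
  rw [Matrix.isUnit_iff_isUnit_det] at hu
  have hmul : cfc (fun x : ℝ => (x - 1) / (1 + s * (x - 1))) X *
      (s • X + (1 - s) • (1 : Matrix N N ℂ)) = X - 1 := by
    rw [← hM, ← hX1, ← cfc_mul _ _ X (hfin.continuousOn _) (hfin.continuousOn _)]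
    refine cfc_congr fun x hx => ?_
    rw [hX.isHermitian.spectrum_real_eq_range_eigenvalues] at hx
    obtain ⟨i, rfl⟩ := hx
    have hne := one_add_mul_sub_one_pos (hX.eigenvalues_pos i) hs
    rw [show ∀ x : ℝ, s * x + (1 - s) = 1 + s * (x - 1) from fun x => by ring]
    exact div_mul_cancel₀ _ hne.ne'
  rw [← hmul, Matrix.mul_nonsing_inv_cancel_right _ _ hu]

/-- `log X = ∫₀¹ (X - 1) (s X + (1 - s))⁻¹ ds`, by the fundamental theorem of calculus applied to
`s ↦ log (1 + s (X - 1))`. -/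
lemma posDef_log_eq_integral {X : Matrix N N ℂ} (hX : X.PosDef) :
    cfc Real.log X =
      ∫ s in (0 : ℝ)..1, (X - 1) * (s • X + (1 - s) • (1 : Matrix N N ℂ))⁻¹ := by
  have hd : ∀ s ∈ uIcc (0 : ℝ) 1,
      HasDerivAt (fun s : ℝ => cfc (fun x => Real.log (1 + s * (x - 1))) X)
        ((X - 1) * (s • X + (1 - s) • (1 : Matrix N N ℂ))⁻¹) s := by
    intro s hs
    rw [uIcc_of_le zero_le_one] at hs
    rw [← posDef_cfc_segment hX hs]
    refine hasDerivAt_cfc_param hX.isHermitian fun i => ?_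
    have h1 : HasDerivAt (fun s : ℝ => 1 + s * (hX.isHermitian.eigenvalues i - 1))
        (hX.isHermitian.eigenvalues i - 1) s := by
      simpa using ((hasDerivAt_id s).mul_const (hX.isHermitian.eigenvalues i - 1)).const_add 1
    exact h1.log (one_add_mul_sub_one_pos (hX.eigenvalues_pos i) hs).ne'
  rw [intervalIntegral.integral_eq_sub_of_hasDerivAt hd]
  · simp
  · exact (continuousOn_const.mul
      (continuousOn_segment_inv hX)).intervalIntegrable_of_Icc zero_le_one

/-- Exact difference formula for the logarithm, with no smallness of `X - Y`: since `R_Y` commutes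
with `Y - 1`, it follows from `X - Y = M_Y (X - 1) - (Y - 1) M_X` under the integral. -/
lemma posDef_log_sub_log {X Y : Matrix N N ℂ} (hX : X.PosDef) (hY : Y.PosDef) :
    cfc Real.log X - cfc Real.log Y =
      ∫ s in (0 : ℝ)..1, (s • Y + (1 - s) • (1 : Matrix N N ℂ))⁻¹ * (X - Y) *
        (s • X + (1 - s) • (1 : Matrix N N ℂ))⁻¹ := by
  have hcont : ∀ {Z : Matrix N N ℂ}, Z.PosDef → ContinuousOn
      (fun s : ℝ => (Z - 1) * (s • Z + (1 - s) • (1 : Matrix N N ℂ))⁻¹) (Icc 0 1) :=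
    fun hZ => continuousOn_const.mul (continuousOn_segment_inv hZ)
  rw [posDef_log_eq_integral hX, posDef_log_eq_integral hY,
    ← intervalIntegral.integral_sub
      ((hcont hX).intervalIntegrable_of_Icc zero_le_one)
      ((hcont hY).intervalIntegrable_of_Icc zero_le_one)]
  refine intervalIntegral.integral_congr fun s hs => ?_
  rw [uIcc_of_le zero_le_one] at hs
  have hx := (posDef_segment hX hs).isUnit
  have hy := (posDef_segment hY hs).isUnit
  rw [Matrix.isUnit_iff_isUnit_det] at hx hy
  have hM : ∀ Z : Matrix N N ℂ,
      s • Z + (1 - s) • (1 : Matrix N N ℂ) = 1 + s • (Z - 1) := fun Z => by module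
  rw [hM] at hx hy
  simp only [hM]
  rw [← sub_sub_sub_cancel_right X Y 1]
  generalize X - 1 = P at *
  generalize Y - 1 = Q at *
  have hcomm : Q * (1 + s • Q)⁻¹ = (1 + s • Q)⁻¹ * Q := by
    have h : Q * (1 + s • Q) = (1 + s • Q) * Q := by simp [mul_add, add_mul]
    rw [← Matrix.nonsing_inv_mul_cancel_left _ (Q * (1 + s • Q)⁻¹) hy, ← mul_assoc (1 + s • Q),
      ← h, Matrix.mul_nonsing_inv_cancel_right _ _ hy]
  have hPQ : P - Q = (1 + s • Q) * P - Q * (1 + s • P) := by simp [mul_add, add_mul]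
  rw [hcomm, hPQ, mul_sub, sub_mul, Matrix.nonsing_inv_mul_cancel_left _ _ hy, ← mul_assoc _ Q,
    Matrix.mul_nonsing_inv_cancel_right _ _ hx]

end

/-- Lemma 1 (Haber): integral representation of the derivative of the matrix logarithm,
`d/dt log A(t) = ∫₀¹ ds [sA(t₀)+(1−s)I]⁻¹ A' [sA(t₀)+(1−s)I]⁻¹`, where the logarithm of a
positive definite matrix is defined via the continuous functional calculus applied to the
real logarithm. -/
theorem hasDerivAt_matrix_log {N : Type*} [Fintype N] [DecidableEq N] [Nonempty N]
    (A : ℝ → Matrix N N ℂ) (t₀ : ℝ) (A' : Matrix N N ℂ)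
    (hpos : ∀ᶠ t in nhds t₀, (A t).PosDef)
    (hA : HasDerivAt A A' t₀) :
    HasDerivAt (fun t => cfc Real.log (A t))
      (∫ s in (0:ℝ)..1,
        (s • A t₀ + (1 - s) • (1 : Matrix N N ℂ))⁻¹ * A' *
          (s • A t₀ + (1 - s) • (1 : Matrix N N ℂ))⁻¹) t₀ := by
  have h₀ : (A t₀).PosDef := hpos.self_of_nhds
  have hpos' : ∀ᶠ t in 𝓝[≠] t₀, (A t).PosDef := hpos.filter_mono nhdsWithin_le_nhds
  refine hasDerivAt_iff_tendsto_slope.2 ?_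
  have hp : Tendsto (fun t => (A t, slope A t₀ t)) (𝓝[≠] t₀) (𝓝 (A t₀, A')) :=
    (hA.continuousAt.tendsto.mono_left nhdsWithin_le_nhds).prodMk_nhds
      (hasDerivAt_iff_tendsto_slope.1 hA)
  have key := tendsto_integral_of_continuousAt
    (F := fun (p : Matrix N N ℂ × Matrix N N ℂ) (s : ℝ) =>
      (s • A t₀ + (1 - s) • (1 : Matrix N N ℂ))⁻¹ * p.2 *
        (s • p.1 + (1 - s) • (1 : Matrix N N ℂ))⁻¹) hp
    (fun s hs => by
      have h1 := (continuousAt_segment_inv h₀ hs).comp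
        (f := fun z : (Matrix N N ℂ × Matrix N N ℂ) × ℝ => (A t₀, z.2))
        (x := ((A t₀, A'), s)) (by fun_prop)
      have h2 := (continuousAt_segment_inv h₀ hs).comp
        (f := fun z : (Matrix N N ℂ × Matrix N N ℂ) × ℝ => (z.1.1, z.2))
        (x := ((A t₀, A'), s)) (by fun_prop)
      exact (h1.mul (by fun_prop)).mul h2)
    (hpos'.mono fun t ht => ((continuousOn_segment_inv h₀).mul continuousOn_const).mul
      (continuousOn_segment_inv ht))
  refine key.congr' ?_
  filter_upwards [hpos'] with t ht
  rw [slope_def_module (fun t => cfc Real.log (A t)), posDef_log_sub_log ht h₀, ← intervalIntegral.integral_smul]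
  refine intervalIntegral.integral_congr fun s _ => ?_
  simp only [slope_def_module, Matrix.mul_smul, Matrix.smul_mul]
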